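/- arXiv:1908.09385 — 2 statements merged into one kernel-verified Lean document; each statement's English description precedes it below -/
import Mathlib

section
/- Let ω: ℝ → ℝ be a Schwartz function and set u_x = Hω (the Hilbert transform of ω). Then the function x ↦ (u_x(x) − u_x(0))·ω(x)/x extends continuously to x = 0, is Lebesgue integrable on ℝ, and ∫_ℝ (u_x(x) − u_x(0))·ω(x)/x dx = (π/2)·( u_x(0)² + ω(0)² ). -/
open MeasureTheory Filter Real Set

/-- `HilbertAt f x L` means the principal-value Hilbert transform
`(1/π) P.V. ∫ f(y)/(x-y) dy` exists at `x` and equals `L`. -/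
def HilbertAt (f : ℝ → ℝ) (x L : ℝ) : Prop :=
  Filter.Tendsto
    (fun ε : ℝ => (1 / Real.pi) * ∫ y in {y : ℝ | ε < |x - y|}, f y / (x - y))
    (nhdsWithin 0 (Set.Ioi 0)) (nhds L)

/-!
Write `a = 𝓕 f`. On the Fourier side the Hilbert transform is multiplication by `-i sgn ξ`; for the
principal value this comes from Abel damping, since `∫₀^∞ e^{-st} sin (bt) / t dt = arctan (b / s)`
tends to `(π / 2) sgn b` as `s → 0⁺`. Hence `(Hf(x) - Hf(0)) / x` is the integral of
`-i sgn ξ a(ξ)` against `(e^{2πixξ} - 1) / x = 2πi ∫₀^ξ e^{2πixη} dη`, and pairing with `f` gives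

`∫ f(x) (Hf(x) - Hf(0)) / x dx = 2π ∫ sgn ξ a(ξ) ∫₀^ξ a(-η) dη dξ`.

Folded onto the half-line, the right-hand integrand is the derivative of the product of the
primitives of `a` and `a(-·)`, so the value is `2π p q` with `p = ∫₀^∞ a(ξ) dξ` and
`q = ∫₀^∞ a(-ξ) dξ`. Fourier inversion gives `f(0) = p + q` and `Hf(0) = -i (p - q)`, whence
`4pq = f(0)² + Hf(0)²`.
-/

open scoped FourierTransform Topology

lemma norm_fourierChar_sub_one_le (t : ℝ) : ‖(𝐞 t : ℂ) - 1‖ ≤ 2 * π * |t| := by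
  have h := Real.norm_exp_I_mul_ofReal_sub_one_le (x := 2 * π * t)
  rwa [mul_comm Complex.I, ← Real.fourierChar_apply, norm_mul, norm_of_nonneg two_pi_pos.le,
    norm_eq_abs] at h

lemma fourierChar_neg_sub_fourierChar (t : ℝ) :
    (𝐞 (-t) : ℂ) - 𝐞 t = -2 * Complex.I * Real.sin (2 * π * t) := by
  simp only [Real.fourierChar_apply, mul_neg, Complex.ofReal_neg, Complex.exp_mul_I,
    Complex.cos_neg, Complex.sin_neg, Complex.ofReal_sin]
  ring

lemma fourierInv_real_eq_integral (a : ℝ → ℂ) (x : ℝ) :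
    𝓕⁻ a x = ∫ ξ, 𝐞 (x * ξ) * a ξ := by
  simp [Real.fourierInv_eq, Circle.smul_def]

lemma integrable_fourierChar_mul {a : ℝ → ℂ} (ha : Integrable a) (x : ℝ) :
    Integrable fun ξ ↦ (𝐞 (x * ξ) : ℂ) * a ξ :=
  ha.bdd_mul (c := 1) (by fun_prop) (.of_forall fun _ ↦ (Circle.norm_coe _).le)

lemma fourierInv_sub_sub_fourierInv_add {a : ℝ → ℂ} (ha : Integrable a) (x t : ℝ) :
    𝓕⁻ a (x - t) - 𝓕⁻ a (x + t) =
      ∫ ξ, 𝐞 (x * ξ) * a ξ * (-2 * Complex.I * Real.sin (2 * π * (t * ξ))) := by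
  simp only [fourierInv_real_eq_integral]
  rw [← integral_sub (integrable_fourierChar_mul ha _) (integrable_fourierChar_mul ha _)]
  refine integral_congr_ae (.of_forall fun ξ ↦ ?_)
  simp only [← fourierChar_neg_sub_fourierChar, sub_mul, add_mul, sub_eq_add_neg (x * ξ),
    AddChar.map_add_eq_mul, Circle.coe_mul]
  ring

section Deriv

variable {E : Type*} [NormedAddCommGroup E] [NormedSpace ℂ E] {a : ℝ → E}

lemma differentiable_fourierInv (ha : Integrable a) (ha' : Integrable fun ξ ↦ ξ • a ξ) :
    Differentiable ℝ (𝓕⁻ a) := by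
  simp only [funext (Real.fourierInv_eq_fourier_neg a)]
  exact fun x ↦ (Real.hasDerivAt_fourier ha ha' _).differentiableAt.comp x differentiableAt_id.neg

lemma lipschitzWith_fourierInv (ha : Integrable a) (ha' : Integrable fun ξ ↦ ξ • a ξ) :
    LipschitzWith (2 * π * ∫ ξ, ‖ξ • a ξ‖).toNNReal (𝓕⁻ a) := by
  have hF : LipschitzWith (2 * π * ∫ ξ, ‖ξ • a ξ‖).toNNReal (𝓕 a) := by
    refine lipschitzWith_of_nnnorm_deriv_le
      (fun x ↦ (Real.hasDerivAt_fourier ha ha' x).differentiableAt) fun x ↦ ?_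
    rw [Real.deriv_fourier ha ha', ← norm_toNNReal]
    refine toNNReal_le_toNNReal
      ((VectorFourier.norm_fourierIntegral_le_integral_norm ..).trans_eq ?_)
    rw [← integral_const_mul]
    simp [norm_smul, abs_of_pos pi_pos, mul_assoc]
  simpa [Function.comp_def, ← Real.fourierInv_eq_fourier_neg] using!
    hF.comp (LipschitzWith.id.neg)

end Deriv

section OfReal

variable {b : ℝ → ℂ} {h : ℝ → ℝ}

lemma differentiable_of_ofReal_eq_fourierInv (hb : Integrable b)
    (hb' : Integrable fun ξ ↦ ξ • b ξ) (hhb : ∀ x, (h x : ℂ) = 𝓕⁻ b x) : Differentiable ℝ h := by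
  have hre : h = fun x ↦ (𝓕⁻ b x).re := funext fun x ↦ by rw [← hhb, Complex.ofReal_re]
  exact hre ▸ Complex.reCLM.differentiable.comp (differentiable_fourierInv hb hb')

lemma lipschitzWith_of_ofReal_eq_fourierInv (hb : Integrable b)
    (hb' : Integrable fun ξ ↦ ξ • b ξ) (hhb : ∀ x, (h x : ℂ) = 𝓕⁻ b x) :
    LipschitzWith (2 * π * ∫ ξ, ‖ξ • b ξ‖).toNNReal h := by
  refine LipschitzWith.of_dist_le_mul fun x y ↦ ?_
  rw [← Complex.isometry_ofReal.dist_eq, hhb, hhb]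
  exact (lipschitzWith_fourierInv hb hb').dist_le_mul x y

end OfReal

section Exponential

lemma integrableOn_exp_neg_mul {s : ℝ} (hs : 0 < s) :
    IntegrableOn (fun t ↦ exp (-(s * t))) (Ioi 0) := by
  simpa using integrableOn_exp_mul_Ioi (neg_neg_of_pos hs) 0

lemma integral_exp_neg_mul_cos {s : ℝ} (hs : 0 < s) (b : ℝ) :
    ∫ t in Ioi 0, exp (-(s * t)) * cos (b * t) = s / (s ^ 2 + b ^ 2) := by
  have hre : (⟨-s, b⟩ : ℂ).re < 0 := neg_neg_of_pos hs
  calc ∫ t in Ioi 0, exp (-(s * t)) * cos (b * t)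
      = ∫ t : ℝ in Ioi 0, (Complex.exp (⟨-s, b⟩ * t)).re := by simp [Complex.exp_re]
    _ = (∫ t : ℝ in Ioi 0, Complex.exp (⟨-s, b⟩ * t)).re :=
        integral_re (integrableOn_exp_mul_complex_Ioi hre 0)
    _ = s / (s ^ 2 + b ^ 2) := by
        rw [integral_exp_mul_complex_Ioi hre]
        simp [Complex.div_re, Complex.normSq, sq]

lemma abs_sin_mul_div_le (b t : ℝ) : |sin (b * t) / t| ≤ |b| := by
  rw [abs_div]
  exact div_le_of_le_mul₀ (abs_nonneg t) (abs_nonneg b) (abs_mul b t ▸ abs_sin_le_abs)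

lemma hasDerivAt_integral_exp_neg_mul_sin_div {s : ℝ} (hs : 0 < s) (b : ℝ) :
    HasDerivAt (fun b ↦ ∫ t in Ioi 0, exp (-(s * t)) * (sin (b * t) / t))
      (s / (s ^ 2 + b ^ 2)) b := by
  rw [← integral_exp_neg_mul_cos hs]
  refine (hasDerivAt_integral_of_dominated_loc_of_deriv_le
    (F' := fun b t ↦ exp (-(s * t)) * cos (b * t)) (bound := fun t ↦ exp (-(s * t)))
    univ_mem (.of_forall fun _ ↦ ?_) ?_ ?_ ?_ (integrableOn_exp_neg_mul hs) ?_).2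
  · exact Measurable.aestronglyMeasurable (by fun_prop)
  · exact (integrableOn_exp_neg_mul hs).mul_bdd (Measurable.aestronglyMeasurable (by fun_prop))
      (.of_forall (abs_sin_mul_div_le b))
  · exact Continuous.aestronglyMeasurable (by fun_prop)
  · refine .of_forall fun t b _ ↦ ?_
    rw [norm_mul, norm_of_nonneg (exp_pos _).le]
    exact mul_le_of_le_one_right (exp_pos _).le (abs_cos_le_one _)
  · filter_upwards [ae_restrict_mem measurableSet_Ioi] with t (ht : 0 < t) b _
    have := (((hasDerivAt_mul_const t (x := b)).sin.div_const t).const_mul (exp (-(s * t))))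
    simpa [ht.ne'] using this

lemma integral_exp_neg_mul_sin_div {s : ℝ} (hs : 0 < s) (b : ℝ) :
    ∫ t in Ioi 0, exp (-(s * t)) * (sin (b * t) / t) = arctan (b / s) := by
  have hderiv (c : ℝ) : HasDerivAt
      (fun c ↦ (∫ t in Ioi 0, exp (-(s * t)) * (sin (c * t) / t)) - arctan (c / s)) 0 c := by
    convert! (hasDerivAt_integral_exp_neg_mul_sin_div hs c).sub
      ((hasDerivAt_id c).div_const s).arctan using 1
    simp only [id_eq]
    field_simp
    ring
  have hconst := is_const_of_deriv_eq_zero (fun c ↦ (hderiv c).differentiableAt)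
    (fun c ↦ (hderiv c).deriv) b 0
  simpa [sub_eq_zero] using hconst

lemma tendsto_integral_exp_neg_mul_smul {E : Type*} [NormedAddCommGroup E] [NormedSpace ℝ E]
    {g : ℝ → E} (hg : IntegrableOn g (Ioi 0)) :
    Tendsto (fun s ↦ ∫ t in Ioi 0, exp (-(s * t)) • g t) (𝓝[>] 0) (𝓝 (∫ t in Ioi 0, g t)) := by
  refine tendsto_integral_filter_of_dominated_convergence (fun t ↦ ‖g t‖)
    (.of_forall fun s ↦ (by fun_prop : Continuous fun t ↦ exp (-(s * t))).aestronglyMeasurable.smul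
      hg.aestronglyMeasurable) ?_ hg.norm ?_
  · filter_upwards [self_mem_nhdsWithin] with s (hs : 0 < s)
    filter_upwards [ae_restrict_mem measurableSet_Ioi] with t (ht : 0 < t)
    rw [norm_smul, norm_of_nonneg (exp_pos _).le]
    exact mul_le_of_le_one_left (norm_nonneg _) (exp_le_one_iff.2 (by nlinarith))
  · refine .of_forall fun t ↦ tendsto_nhdsWithin_of_tendsto_nhds ?_
    have : Continuous fun s : ℝ ↦ exp (-(s * t)) • g t := by fun_prop
    simpa using this.tendsto 0

lemma tendsto_arctan_div_nhdsGT_zero (b : ℝ) :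
    Tendsto (fun s ↦ arctan (b / s)) (𝓝[>] 0) (𝓝 (π / 2 * SignType.sign b)) := by
  simp only [div_eq_mul_inv b]
  rcases lt_trichotomy b 0 with hb | rfl | hb
  · simpa [sign_neg hb, Function.comp_def] using
      (tendsto_arctan_atBot.mono_right nhdsWithin_le_nhds).comp
        (tendsto_inv_nhdsGT_zero.const_mul_atTop_of_neg hb)
  · simp
  · simpa [sign_pos hb, Function.comp_def] using
      (tendsto_arctan_atTop.mono_right nhdsWithin_le_nhds).comp
        (tendsto_inv_nhdsGT_zero.const_mul_atTop hb)

end Exponential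

section PrincipalValue

lemma integral_Ioi_add_integral_Ioi_comp_neg {E : Type*} [NormedAddCommGroup E] [NormedSpace ℝ E]
    {F : ℝ → E} (hF : Integrable F) :
    (∫ t in Ioi 0, F t) + ∫ t in Ioi 0, F (-t) = ∫ t, F t := by
  rw [integral_comp_neg_Ioi, neg_zero, add_comm,
    intervalIntegral.integral_Iic_add_Ioi hF.integrableOn hF.integrableOn]

lemma setIntegral_div_sub_eq_integral_Ioi {f : ℝ → ℝ} (hf : Integrable f) (x : ℝ) {ε : ℝ}
    (hε : 0 < ε) :
    ∫ y in {y | ε < |x - y|}, f y / (x - y) = ∫ t in Ioi ε, (f (x - t) - f (x + t)) / t := by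
  have hS : MeasurableSet {t : ℝ | ε < |t|} := measurableSet_lt (by fun_prop) (by fun_prop)
  set F : ℝ → ℝ := {t | ε < |t|}.indicator fun t ↦ f (x - t) / t with hF
  have hFi : Integrable F := by
    refine (integrable_indicator_iff hS).2 ((hf.comp_sub_left x).integrableOn.mul_bdd (c := ε⁻¹)
      (by fun_prop) ?_)
    filter_upwards [ae_restrict_mem hS] with t ht
    simpa using inv_anti₀ hε (le_of_lt ht)
  have hFneg : ∀ t ∈ Ioi (0 : ℝ),
      F t + F (-t) = (Ioi ε).indicator (fun t ↦ (f (x - t) - f (x + t)) / t) t := by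
    intro t (ht : 0 < t)
    simp only [hF, indicator_apply, mem_ofPred_eq, abs_neg, abs_of_pos ht, mem_Ioi]
    split_ifs
    · rw [sub_neg_eq_add]; ring
    · simp
  calc ∫ y in {y | ε < |x - y|}, f y / (x - y)
      = ∫ t, F t := by
        rw [← integral_indicator (measurableSet_lt (by fun_prop) (by fun_prop)),
          ← integral_sub_left_eq_self _ volume x]
        simp [hF, indicator_apply]
    _ = ∫ t in Ioi 0, (F t + F (-t)) := by
        rw [← integral_Ioi_add_integral_Ioi_comp_neg hFi,
          integral_add hFi.integrableOn hFi.comp_neg.integrableOn]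
    _ = ∫ t in Ioi ε, (f (x - t) - f (x + t)) / t := by
        rw [setIntegral_congr_fun measurableSet_Ioi hFneg, setIntegral_indicator measurableSet_Ioi,
          inter_eq_right.2 (Ioi_subset_Ioi hε.le)]

lemma integrableOn_Ioi_sub_div_of_lipschitzWith {f : ℝ → ℝ} {K : NNReal} (hf : Integrable f)
    (hK : LipschitzWith K f) (x : ℝ) :
    IntegrableOn (fun t ↦ (f (x - t) - f (x + t)) / t) (Ioi 0) := by
  have hsub : Integrable fun t ↦ f (x - t) - f (x + t) :=
    (hf.comp_sub_left x).sub (hf.comp_add_left x)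
  have hmeas : AEStronglyMeasurable fun t ↦ (f (x - t) - f (x + t)) / t :=
    (hsub.aemeasurable.div aemeasurable_id).aestronglyMeasurable
  rw [← Ioc_union_Ioi_eq_Ioi zero_le_one]
  refine IntegrableOn.union ?_ ?_
  · refine Measure.integrableOn_of_bounded (M := 2 * K) (by simp) hmeas ?_
    filter_upwards [ae_restrict_mem measurableSet_Ioc] with t ht
    rw [norm_div, norm_of_nonneg ht.1.le, div_le_iff₀ ht.1]
    refine (hK.norm_sub_le _ _).trans_eq ?_
    rw [show x - t - (x + t) = -(2 * t) by ring, norm_neg, norm_of_nonneg (by linarith [ht.1])]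
    ring
  · refine hsub.norm.integrableOn.mono' hmeas.restrict ?_
    filter_upwards [ae_restrict_mem measurableSet_Ioi] with t (ht : 1 < t)
    rw [norm_div, norm_of_nonneg (zero_le_one.trans ht.le)]
    exact div_le_self (norm_nonneg _) ht.le

lemma hilbertAt_of_integrableOn {f : ℝ → ℝ} {x : ℝ} (hf : Integrable f)
    (hfx : IntegrableOn (fun t ↦ (f (x - t) - f (x + t)) / t) (Ioi 0)) :
    HilbertAt f x (1 / π * ∫ t in Ioi 0, (f (x - t) - f (x + t)) / t) := by
  have hlim := hfx.continuousWithinAt_Ici_primitive_Ioi.mono_left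
    (nhdsWithin_mono 0 Ioi_subset_Ici_self)
  refine (hlim.const_mul (1 / π)).congr' ?_
  filter_upwards [self_mem_nhdsWithin] with ε hε
  rw [setIntegral_div_sub_eq_integral_Ioi hf x hε]

end PrincipalValue

section Multiplier

/-- The Fourier multiplier `-i sgn ξ` of the Hilbert transform, for the convention
`𝓕 f ξ = ∫ x, exp (-2πixξ) f x`. -/
noncomputable def hilbertMultiplier (ξ : ℝ) : ℂ := -Complex.I * SignType.sign ξ

lemma hilbertMultiplier_of_pos {ξ : ℝ} (hξ : 0 < ξ) : hilbertMultiplier ξ = -Complex.I := by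
  simp [hilbertMultiplier, hξ]

lemma hilbertMultiplier_neg (ξ : ℝ) : hilbertMultiplier (-ξ) = -hilbertMultiplier ξ := by
  simp [hilbertMultiplier, Left.sign_neg]

lemma norm_hilbertMultiplier_le_one (ξ : ℝ) : ‖hilbertMultiplier ξ‖ ≤ 1 := by
  rcases lt_trichotomy ξ 0 with hξ | rfl | hξ <;> simp [hilbertMultiplier, *]

lemma measurable_hilbertMultiplier : Measurable hilbertMultiplier := by
  simp only [funext fun ξ ↦ hilbertMultiplier.eq_1 ξ, sign_apply,
    apply_ite (SignType.cast (α := ℂ))]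
  exact .const_mul (.ite measurableSet_Ioi measurable_const
    (.ite measurableSet_Iio measurable_const measurable_const)) _

variable {a : ℝ → ℂ}

lemma integrable_hilbertMultiplier_mul (ha : Integrable a) :
    Integrable fun ξ ↦ hilbertMultiplier ξ * a ξ :=
  ha.bdd_mul measurable_hilbertMultiplier.aestronglyMeasurable
    (.of_forall norm_hilbertMultiplier_le_one)

lemma integrable_smul_hilbertMultiplier_mul (ha : Integrable fun ξ ↦ ξ • a ξ) :
    Integrable fun ξ ↦ ξ • (hilbertMultiplier ξ * a ξ) := by
  simpa only [mul_smul_comm] using integrable_hilbertMultiplier_mul ha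

lemma integral_exp_neg_mul_fourierInv_sub_div (ha : Integrable a)
    (ha' : Integrable fun ξ ↦ ξ • a ξ) (x : ℝ) {s : ℝ} (hs : 0 < s) :
    ∫ t in Ioi 0, exp (-(s * t)) • ((𝓕⁻ a (x - t) - 𝓕⁻ a (x + t)) / t) =
      ∫ ξ, 𝐞 (x * ξ) * a ξ * (-2 * Complex.I * arctan (2 * π * ξ / s)) := by
  let k (ξ t : ℝ) : ℝ := exp (-(s * t)) * (sin (2 * π * ξ * t) / t)
  have hk : ∀ ξ t, |k ξ t| ≤ 2 * π * |ξ| * exp (-(s * t)) := fun ξ t ↦ by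
    rw [abs_mul, abs_exp, mul_comm]
    simpa only [abs_mul (2 * π), abs_of_pos two_pi_pos] using
      mul_le_mul_of_nonneg_right (abs_sin_mul_div_le (2 * π * ξ) t) (exp_pos (-(s * t))).le
  have hint : Integrable (fun p : ℝ × ℝ ↦ 𝐞 (x * p.2) * a p.2 * (-2 * Complex.I * k p.2 p.1))
      ((volume.restrict (Ioi 0)).prod volume) := by
    refine (((integrableOn_exp_neg_mul hs).mul_prod ha'.norm).const_mul (4 * π)).mono' ?_ ?_
    · refine ((integrable_fourierChar_mul ha x).aestronglyMeasurable.comp_snd).mul ?_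
      exact Measurable.aestronglyMeasurable (by fun_prop)
    · refine .of_forall fun p ↦ ?_
      have := mul_le_mul_of_nonneg_left (hk p.2 p.1) (norm_nonneg (a p.2))
      simp only [norm_mul, norm_neg, Circle.norm_coe, Complex.norm_I, Complex.norm_real,
        Complex.norm_ofNat, norm_smul, norm_eq_abs]
      linarith
  calc ∫ t in Ioi 0, exp (-(s * t)) • ((𝓕⁻ a (x - t) - 𝓕⁻ a (x + t)) / t)
      = ∫ t in Ioi 0, ∫ ξ, 𝐞 (x * ξ) * a ξ * (-2 * Complex.I * k ξ t) := by
        refine integral_congr_ae (.of_forall fun t ↦ ?_)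
        simp only [fourierInv_sub_sub_fourierInv_add ha, ← integral_div, ← integral_smul, k]
        refine integral_congr_ae (.of_forall fun ξ ↦ ?_)
        simp only [Complex.real_smul, mul_comm t ξ, ← mul_assoc]
        push_cast
        ring
    _ = ∫ ξ, 𝐞 (x * ξ) * a ξ * (-2 * Complex.I * arctan (2 * π * ξ / s)) := by
        rw [integral_integral_swap hint]
        simp only [integral_const_mul, integral_complex_ofReal, k,
          integral_exp_neg_mul_sin_div hs]

lemma tendsto_integral_mul_arctan (ha : Integrable a) (x : ℝ) :
    Tendsto (fun s ↦ ∫ ξ, 𝐞 (x * ξ) * a ξ * (-2 * Complex.I * arctan (2 * π * ξ / s))) (𝓝[>] 0)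
      (𝓝 (π * 𝓕⁻ (fun ξ ↦ hilbertMultiplier ξ * a ξ) x)) := by
  have hsign : π * 𝓕⁻ (fun ξ ↦ hilbertMultiplier ξ * a ξ) x =
      ∫ ξ, 𝐞 (x * ξ) * a ξ * (-2 * Complex.I * ↑(π / 2 * SignType.sign (2 * π * ξ))) := by
    rw [fourierInv_real_eq_integral, ← integral_const_mul]
    refine integral_congr_ae (.of_forall fun ξ ↦ ?_)
    simp only [sign_mul, sign_pos two_pi_pos, one_mul, hilbertMultiplier]
    rw [Complex.ofReal_mul, ← Complex.ofRealHom_eq_coe (SignType.cast _), SignType.map_cast]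
    push_cast
    ring
  rw [hsign]
  refine tendsto_integral_filter_of_dominated_convergence (fun ξ ↦ π * ‖a ξ‖) ?_ ?_
    (ha.norm.const_mul π) ?_
  · refine .of_forall fun s ↦ (integrable_fourierChar_mul ha x).aestronglyMeasurable.mul ?_
    exact Measurable.aestronglyMeasurable (by fun_prop)
  · refine .of_forall fun s ↦ .of_forall fun ξ ↦ ?_
    have : |arctan (2 * π * ξ / s)| ≤ π / 2 :=
      abs_le.2 ⟨(neg_pi_div_two_lt_arctan _).le, (arctan_lt_pi_div_two _).le⟩
    calc _ = ‖a ξ‖ * (2 * |arctan (2 * π * ξ / s)|) := by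
          simp only [norm_mul, norm_neg, Circle.norm_coe, Complex.norm_I, Complex.norm_real,
            Complex.norm_ofNat, norm_eq_abs, one_mul, mul_one]
      _ ≤ π * ‖a ξ‖ := by nlinarith [norm_nonneg (a ξ)]
  · refine .of_forall fun ξ ↦ ?_
    have := (Complex.continuous_ofReal.tendsto _).comp (tendsto_arctan_div_nhdsGT_zero (2 * π * ξ))
    exact (this.const_mul _).const_mul _

lemma integral_fourierInv_sub_div_eq (ha : Integrable a) (ha' : Integrable fun ξ ↦ ξ • a ξ)
    {x : ℝ} (hax : IntegrableOn (fun t ↦ (𝓕⁻ a (x - t) - 𝓕⁻ a (x + t)) / t) (Ioi 0)) :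
    ∫ t in Ioi 0, (𝓕⁻ a (x - t) - 𝓕⁻ a (x + t)) / t =
      π * 𝓕⁻ (fun ξ ↦ hilbertMultiplier ξ * a ξ) x := by
  refine tendsto_nhds_unique (tendsto_integral_exp_neg_mul_smul hax)
    ((tendsto_integral_mul_arctan ha x).congr' ?_)
  filter_upwards [self_mem_nhdsWithin] with s hs
  rw [integral_exp_neg_mul_fourierInv_sub_div ha ha' x hs]

end Multiplier

lemma HilbertAt.ofReal_eq_fourierInv {f : ℝ → ℝ} {x L : ℝ} (hL : HilbertAt f x L)
    (hf : Integrable f) {a : ℝ → ℂ} (ha : Integrable a) (ha' : Integrable fun ξ ↦ ξ • a ξ)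
    (hfa : ∀ x, (f x : ℂ) = 𝓕⁻ a x) :
    (L : ℂ) = 𝓕⁻ (fun ξ ↦ hilbertMultiplier ξ * a ξ) x := by
  have hlip := lipschitzWith_of_ofReal_eq_fourierInv ha ha' hfa
  have hfx := integrableOn_Ioi_sub_div_of_lipschitzWith hf hlip x
  have hfax : (fun t : ℝ ↦ (𝓕⁻ a (x - t) - 𝓕⁻ a (x + t)) / t) =
      fun t : ℝ ↦ (((f (x - t) - f (x + t)) / t : ℝ) : ℂ) := by
    simp [← hfa]
  have hmul := integral_fourierInv_sub_div_eq ha ha' (hfax ▸ hfx.ofReal)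
  rw [hfax, integral_complex_ofReal] at hmul
  rw [tendsto_nhds_unique hL (hilbertAt_of_integrableOn hf hfx), Complex.ofReal_mul, hmul]
  have : (π : ℂ) ≠ 0 := by exact_mod_cast pi_ne_zero
  push_cast
  field_simp

section Pairing

lemma fourierChar_mul_sub_one_div {x : ℝ} (hx : x ≠ 0) (ξ : ℝ) :
    ((𝐞 (x * ξ) : ℂ) - 1) / x = 2 * π * Complex.I * ∫ η in 0..ξ, (𝐞 (x * η) : ℂ) := by
  have hderiv (η : ℝ) :
      HasDerivAt (fun η : ℝ ↦ (𝐞 (x * η) : ℂ)) (x * (2 * π * Complex.I * 𝐞 (x * η))) η := by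
    simpa using! (Real.hasDerivAt_fourierChar (x * η)).scomp η ((hasDerivAt_id η).const_mul x)
  have hint := intervalIntegral.integral_eq_sub_of_hasDerivAt (a := 0) (b := ξ)
    (fun η _ ↦ hderiv η) (Continuous.intervalIntegrable (by fun_prop) _ _)
  simp only [intervalIntegral.integral_const_mul, mul_zero, AddChar.map_zero_eq_one,
    Circle.coe_one] at hint
  rw [← hint, mul_div_cancel_left₀ _ (Complex.ofReal_ne_zero.2 hx)]

variable {a b f : ℝ → ℂ}

lemma integral_mul_fourierChar_sub_one_div (hf : Integrable f) (ξ : ℝ) :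
    ∫ x, f x * (((𝐞 (x * ξ) : ℂ) - 1) / x) = 2 * π * Complex.I * ∫ η in 0..ξ, 𝓕⁻ f η := by
  have hint : Integrable (Function.uncurry fun η x : ℝ ↦ f x * (𝐞 (x * η) : ℂ))
      ((volume.restrict (uIoc 0 ξ)).prod volume) := by
    have : IsFiniteMeasure (volume.restrict (uIoc 0 ξ)) := ⟨by simp⟩
    refine hf.comp_snd (volume.restrict (uIoc 0 ξ)) |>.mul_bdd (c := 1) ?_ ?_
    · exact Continuous.aestronglyMeasurable (by fun_prop)
    · exact .of_forall fun p ↦ (Circle.norm_coe _).le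
  calc ∫ x, f x * (((𝐞 (x * ξ) : ℂ) - 1) / x)
      = ∫ x, 2 * π * Complex.I * ∫ η in 0..ξ, f x * 𝐞 (x * η) := by
        refine integral_congr_ae ?_
        filter_upwards [Measure.ae_ne volume 0] with x hx
        rw [fourierChar_mul_sub_one_div hx, intervalIntegral.integral_const_mul]
        ring
    _ = 2 * π * Complex.I * ∫ η in 0..ξ, 𝓕⁻ f η := by
        rw [integral_const_mul, ← intervalIntegral_integral_swap hint]
        simp only [fourierInv_real_eq_integral, mul_comm]

lemma integral_mul_fourierInv_sub_div (hf : Integrable f) (hb : Integrable b)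
    (hb' : Integrable fun ξ ↦ ξ • b ξ) :
    ∫ x, f x * ((𝓕⁻ b x - 𝓕⁻ b 0) / x) =
      2 * π * Complex.I * ∫ ξ, b ξ * ∫ η in 0..ξ, 𝓕⁻ f η := by
  have hint : Integrable (Function.uncurry fun x ξ : ℝ ↦
      b ξ * (f x * (((𝐞 (x * ξ) : ℂ) - 1) / x))) := by
    refine ((hf.norm.mul_prod hb'.norm).const_mul (2 * π)).mono' ?_ ?_
    · exact hb.aestronglyMeasurable.comp_snd.mul (hf.aestronglyMeasurable.comp_fst.mul
        (Measurable.aestronglyMeasurable (by fun_prop)))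
    · refine .of_forall fun ⟨x, ξ⟩ ↦ ?_
      have hk : ‖((𝐞 (x * ξ) : ℂ) - 1) / x‖ ≤ 2 * π * |ξ| := by
        rw [norm_div, Complex.norm_real, norm_eq_abs]
        refine div_le_of_le_mul₀ (abs_nonneg x) (by positivity) ?_
        exact (norm_fourierChar_sub_one_le _).trans_eq (by rw [abs_mul]; ring)
      have := mul_le_mul_of_nonneg_left hk (mul_nonneg (norm_nonneg (b ξ)) (norm_nonneg (f x)))
      simp only [Function.uncurry_apply_pair, norm_mul, norm_smul, norm_eq_abs]
      linarith
  have hsub (x : ℝ) : 𝓕⁻ b x - 𝓕⁻ b 0 = ∫ ξ, b ξ * ((𝐞 (x * ξ) : ℂ) - 1) := by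
    simp only [fourierInv_real_eq_integral]
    rw [← integral_sub (integrable_fourierChar_mul hb _) (integrable_fourierChar_mul hb _)]
    simp [mul_comm, mul_sub]
  calc ∫ x, f x * ((𝓕⁻ b x - 𝓕⁻ b 0) / x)
      = ∫ x, ∫ ξ, b ξ * (f x * (((𝐞 (x * ξ) : ℂ) - 1) / x)) := by
        simp only [hsub, ← integral_div, ← integral_const_mul]
        congr! 4
        ring
    _ = ∫ ξ, b ξ * (2 * π * Complex.I * ∫ η in 0..ξ, 𝓕⁻ f η) := by
        rw [integral_integral_swap hint]
        simp only [integral_const_mul, integral_mul_fourierChar_sub_one_div hf]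
    _ = 2 * π * Complex.I * ∫ ξ, b ξ * ∫ η in 0..ξ, 𝓕⁻ f η := by
        simp only [mul_left_comm (b _), integral_const_mul]

lemma integrable_mul_primitive {g : ℝ → ℂ} (hb : Integrable b) (hg : Integrable g) :
    Integrable fun ξ ↦ b ξ * ∫ η in 0..ξ, g η := by
  refine hb.mul_bdd (c := ∫ η, ‖g η‖) (intervalIntegral.continuous_primitive
    (fun _ _ ↦ hg.intervalIntegrable) 0).aestronglyMeasurable (.of_forall fun ξ ↦ ?_)
  exact intervalIntegral.norm_integral_le_integral_norm_uIoc.trans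
    (setIntegral_le_integral hg.norm (.of_forall fun _ ↦ norm_nonneg _))

lemma integral_Ioi_mul_primitive_add {u v : ℝ → ℂ} (hu : Continuous u) (hv : Continuous v)
    (hui : Integrable u) (hvi : Integrable v) :
    ∫ ξ in Ioi 0, (u ξ * (∫ η in 0..ξ, v η) + (∫ η in 0..ξ, u η) * v ξ) =
      (∫ ξ in Ioi 0, u ξ) * ∫ ξ in Ioi 0, v ξ := by
  have hcont : Continuous fun ξ ↦ (∫ η in 0..ξ, u η) * ∫ η in 0..ξ, v η := by fun_prop
  have hint : Integrable fun ξ ↦ u ξ * (∫ η in 0..ξ, v η) + (∫ η in 0..ξ, u η) * v ξ := by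
    simpa only [mul_comm (v _)] using!
      (integrable_mul_primitive hui hvi).add (integrable_mul_primitive hvi hui)
  rw [integral_Ioi_deriv_mul_eq_sub (a' := 0)
    (fun ξ _ ↦ (hu.integral_hasStrictDerivAt 0 ξ).hasDerivAt)
    (fun ξ _ ↦ (hv.integral_hasStrictDerivAt 0 ξ).hasDerivAt) hint.integrableOn
    (tendsto_nhdsWithin_of_tendsto_nhds (by simpa using! hcont.tendsto 0))
    ((intervalIntegral_tendsto_integral_Ioi 0 hui.integrableOn tendsto_id).mul
      (intervalIntegral_tendsto_integral_Ioi 0 hvi.integrableOn tendsto_id)), sub_zero]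

lemma integral_hilbertMultiplier_mul (ha : Integrable a) :
    ∫ ξ, hilbertMultiplier ξ * a ξ =
      -Complex.I * ((∫ ξ in Ioi 0, a ξ) - ∫ ξ in Ioi 0, a (-ξ)) := by
  have hpos : ∀ ξ ∈ Ioi (0 : ℝ), hilbertMultiplier ξ * a ξ = -Complex.I * a ξ :=
    fun ξ hξ ↦ by rw [hilbertMultiplier_of_pos hξ]
  have hneg : ∀ ξ ∈ Ioi (0 : ℝ), hilbertMultiplier (-ξ) * a (-ξ) = Complex.I * a (-ξ) :=
    fun ξ hξ ↦ by rw [hilbertMultiplier_neg, hilbertMultiplier_of_pos hξ, neg_neg]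
  rw [← integral_Ioi_add_integral_Ioi_comp_neg (integrable_hilbertMultiplier_mul ha),
    setIntegral_congr_fun measurableSet_Ioi hpos, setIntegral_congr_fun measurableSet_Ioi hneg,
    integral_const_mul, integral_const_mul]
  ring

lemma integral_hilbertMultiplier_mul_mul_primitive (hc : Continuous a) (ha : Integrable a) :
    ∫ ξ, hilbertMultiplier ξ * (a ξ * ∫ η in 0..ξ, a (-η)) =
      -Complex.I * ((∫ ξ in Ioi 0, a ξ) * ∫ ξ in Ioi 0, a (-ξ)) := by
  have hint := integrable_mul_primitive ha ha.comp_neg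
  have hprim := integral_Ioi_mul_primitive_add hc (hc.comp continuous_neg) ha ha.comp_neg
  simp only [Function.comp_apply] at hprim
  rw [integral_hilbertMultiplier_mul hint, ← integral_sub hint.integrableOn
    hint.comp_neg.integrableOn, ← hprim]
  congr! 3 with ξ
  have : ∫ η in 0..-ξ, a (-η) = -∫ η in 0..ξ, a η := by
    rw [intervalIntegral.integral_comp_neg, neg_neg, neg_zero, intervalIntegral.integral_symm]
  rw [this]
  ring

lemma continuous_fourier_real (hf : Integrable f) : Continuous (𝓕 f) :=
  VectorFourier.fourierIntegral_continuous continuous_fourierChar (by fun_prop) hf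

lemma integral_mul_fourierInv_hilbertMultiplier (hf : Integrable f) (ha : Integrable (𝓕 f))
    (ha' : Integrable fun ξ ↦ ξ • 𝓕 f ξ) :
    ∫ x, f x * ((𝓕⁻ (fun ξ ↦ hilbertMultiplier ξ * 𝓕 f ξ) x -
        𝓕⁻ (fun ξ ↦ hilbertMultiplier ξ * 𝓕 f ξ) 0) / x) =
      π / 2 * (𝓕⁻ (fun ξ ↦ hilbertMultiplier ξ * 𝓕 f ξ) 0 ^ 2 + 𝓕⁻ (𝓕 f) 0 ^ 2) := by
  set p := ∫ ξ in Ioi 0, 𝓕 f ξ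
  set q := ∫ ξ in Ioi 0, 𝓕 f (-ξ)
  have hh0 : 𝓕⁻ (fun ξ ↦ hilbertMultiplier ξ * 𝓕 f ξ) 0 = -Complex.I * (p - q) := by
    rw [← integral_hilbertMultiplier_mul ha, fourierInv_real_eq_integral]
    simp
  have hf0 : 𝓕⁻ (𝓕 f) 0 = p + q := by
    rw [integral_Ioi_add_integral_Ioi_comp_neg ha, fourierInv_real_eq_integral]
    simp
  rw [integral_mul_fourierInv_sub_div hf (integrable_hilbertMultiplier_mul ha)
    (integrable_smul_hilbertMultiplier_mul ha'), hh0, hf0]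
  simp only [mul_assoc (hilbertMultiplier _), Real.fourierInv_eq_fourier_neg]
  rw [integral_hilbertMultiplier_mul_mul_primitive (continuous_fourier_real hf) ha]
  linear_combination (-2 * π * (p * q) - π / 2 * (p - q) ^ 2) * Complex.I_sq

end Pairing

lemma continuous_dslope {E : Type*} [NormedAddCommGroup E] [NormedSpace ℝ E] {h : ℝ → E}
    (hh : Differentiable ℝ h) (c : ℝ) : Continuous (dslope h c) :=
  continuousOn_univ.1 ((continuousOn_dslope univ_mem).2 ⟨hh.continuous.continuousOn, hh c⟩)

lemma norm_dslope_le_of_lipschitzWith {E : Type*} [NormedAddCommGroup E] [NormedSpace ℝ E]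
    {h : ℝ → E} {K : NNReal} (hK : LipschitzWith K h) (c x : ℝ) : ‖dslope h c x‖ ≤ K := by
  rcases eq_or_ne x c with rfl | hx
  · rw [dslope_same]
    exact norm_deriv_le_of_lipschitz hK
  · rw [dslope_of_ne _ hx, slope_def_module, norm_smul, norm_inv,
      inv_mul_le_iff₀ (norm_pos_iff.2 (sub_ne_zero.2 hx)), mul_comm]
    exact hK.norm_sub_le x c

lemma integrable_of_integrable_smul {E : Type*} [NormedAddCommGroup E] [NormedSpace ℝ E]
    {g : ℝ → E} (hg : LocallyIntegrable g) (hg' : Integrable fun ξ ↦ ξ • g ξ) :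
    Integrable g := by
  refine hg.integrable_of_isBigO_cocompact (.of_bound 1 ?_) (hg'.integrableAtFilter _)
  filter_upwards [(tendsto_norm_cocompact_atTop (E := ℝ)).eventually_ge_atTop 1] with ξ hξ
  rw [one_mul, norm_smul]
  exact le_mul_of_one_le_left (norm_nonneg _) hξ

lemma integrable_smul_fourier_ofReal (ω : SchwartzMap ℝ ℝ) :
    Integrable fun ξ : ℝ ↦ ξ • 𝓕 (fun x ↦ (ω x : ℂ)) ξ := by
  let Ω : SchwartzMap ℝ ℂ := SchwartzMap.postcompCLM (𝕜 := ℝ) Complex.ofRealCLM ω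
  have hΩ : 𝓕 (fun x ↦ (ω x : ℂ)) = 𝓕 Ω := (SchwartzMap.fourier_coe Ω).symm
  have hmeas : AEStronglyMeasurable fun ξ : ℝ ↦ ξ • (𝓕 Ω) ξ :=
    (continuous_id.smul (𝓕 Ω).continuous).aestronglyMeasurable
  rw [hΩ, ← integrable_norm_iff hmeas]
  exact ((𝓕 Ω).integrable_pow_mul volume 1).congr (.of_forall fun ξ ↦ by simp)

theorem integral_velocity_cancellation_general {f : ℝ → ℝ} (hc : Continuous f)
    (hf : Integrable f) (hf' : Integrable fun ξ : ℝ ↦ ξ • 𝓕 (fun x ↦ (f x : ℂ)) ξ) {ux : ℝ → ℝ}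
    (hux : ∀ x, HilbertAt f x (ux x)) :
    ∃ g : ℝ → ℝ, Continuous g ∧ (∀ x ≠ 0, g x = (ux x - ux 0) * f x / x) ∧ Integrable g ∧
      ∫ x, g x = π / 2 * (ux 0 ^ 2 + f 0 ^ 2) := by
  have hfC : Integrable fun x ↦ (f x : ℂ) := hf.ofReal
  have ha := integrable_of_integrable_smul (continuous_fourier_real hfC).locallyIntegrable hf'
  have hb := integrable_hilbertMultiplier_mul ha
  have hb' := integrable_smul_hilbertMultiplier_mul hf'
  have hinv (x : ℝ) : 𝓕⁻ (𝓕 fun x ↦ (f x : ℂ)) x = f x :=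
    congr_fun ((Complex.continuous_ofReal.comp hc).fourierInv_fourier_eq hfC ha) x
  have huxa (x : ℝ) := (hux x).ofReal_eq_fourierInv hf ha hf' fun x ↦ (hinv x).symm
  have hcont : Continuous (dslope ux 0) :=
    continuous_dslope (differentiable_of_ofReal_eq_fourierInv hb hb' huxa) 0
  have hbound := norm_dslope_le_of_lipschitzWith
    (lipschitzWith_of_ofReal_eq_fourierInv hb hb' huxa) 0
  have hslope : ∀ x ≠ 0, dslope ux 0 x * f x = (ux x - ux 0) * f x / x := fun x hx ↦ by
    rw [dslope_of_ne _ hx, slope_def_field, sub_zero, div_mul_eq_mul_div]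
  refine ⟨fun x ↦ dslope ux 0 x * f x, hcont.mul hc, hslope,
    hf.bdd_mul hcont.aestronglyMeasurable (.of_forall hbound), ?_⟩
  have hpair := integral_mul_fourierInv_hilbertMultiplier hfC ha hf'
  simp only [← huxa, hinv] at hpair
  norm_cast at hpair
  rw [← hpair]
  refine integral_congr_ae ?_
  filter_upwards [Measure.ae_ne volume 0] with x hx
  rw [hslope x hx, mul_div_assoc', mul_comm (f x)]

/-- For a Schwartz function `ω` with `u_x = Hω`, the function
`x ↦ (u_x(x) − u_x(0))·ω(x)/x` extends continuously to `0`, is integrable,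
and its integral equals `(π/2)(u_x(0)² + ω(0)²)`. -/
theorem integral_velocity_cancellation (ω : SchwartzMap ℝ ℝ) (ux : ℝ → ℝ)
    (hH : ∀ x : ℝ, HilbertAt (fun y => ω y) x (ux x)) :
    ∃ g : ℝ → ℝ, Continuous g ∧
      (∀ x : ℝ, x ≠ 0 → g x = (ux x - ux 0) * ω x / x) ∧
      Integrable g ∧
      ∫ x : ℝ, g x = (Real.pi / 2) * ((ux 0)^2 + (ω 0)^2) :=
  integral_velocity_cancellation_general ω.continuous ω.integrable
    (integrable_smul_fourier_ofReal ω) hH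
end

section
/- Let g: ℝ → ℝ be a Schwartz function. Then the principal value integral PV ∫_ℝ (Hg)(x)·g(x)/x dx = lim_{ε→0⁺} ∫_{|x|>ε} (Hg)(x)·g(x)/x dx exists and equals (π/2)·( g(0)² − (Hg)(0)² ). In particular, if g(0) = 0 then PV ∫_ℝ (Hg)(x)·g(x)/x dx = −(π/2)·(Hg)(0)². -/
open MeasureTheory Filter Real Set

/-!
The Cauchy transform `F(z) = ∫ g(y) / (z - y) dy` is holomorphic on the upper half-plane, is
`O(1/|z|)` at infinity and, by the Sokhotski–Plemelj formula, has boundary values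
`F₊ = π (Hg - i g)`. Hence `F² / (z + iδ)` decays fast enough for its integral over the real line
to vanish. Letting `δ → 0` and applying the Sokhotski–Plemelj formula once more, now to `F₊²`,
gives `PV ∫ F₊(x)² / x dx = π i F₊(0)²`. Since `F₊² = π² (Hg² - g² - 2 i Hg · g)`, the claim is
the imaginary part of this identity.

Principal values are handled by folding `t` onto `-t`: against any odd kernel bounded by `1 / |t|`,
such as a truncation of `1 / t` or the real part of `1 / (t + iδ)`, the integrand becomes absolutely
integrable uniformly in the kernel, so dominated convergence applies.
-/

open Complex (I)
open scoped NNReal Topology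

section Majorant

variable {E : Type*} [NormedAddCommGroup E] {G : ℝ → E} {L : ℝ≥0}

/-- An integrable majorant of `c • (G t - G (-t)) / 2`, uniform in `|c| ≤ |t|⁻¹`, for an integrable
function `G` with Lipschitz constant `L`. -/
noncomputable def lipschitzMajorant (G : ℝ → E) (L : ℝ≥0) (t : ℝ) : ℝ :=
  (Icc (-1 : ℝ) 1).indicator (fun _ ↦ (L : ℝ)) t + (‖G t‖ + ‖G (-t)‖) / 2

theorem integrable_indicator_Icc_const (c : ℝ) :
    Integrable ((Icc (-1 : ℝ) 1).indicator fun _ ↦ c) :=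
  (integrable_indicator_iff measurableSet_Icc).2 (by simp)

theorem integrable_lipschitzMajorant (hG : Integrable G) : Integrable (lipschitzMajorant G L) :=
  (integrable_indicator_Icc_const L).add ((hG.norm.add hG.comp_neg.norm).div_const 2)

theorem integral_lipschitzMajorant (hG : Integrable G) :
    ∫ t, lipschitzMajorant G L t = 2 * L + ∫ t, ‖G t‖ := by
  have hneg : ∫ t, ‖G (-t)‖ = ∫ t, ‖G t‖ := integral_neg_eq_self (‖G ·‖) volume
  have hsum : Integrable fun t ↦ (‖G t‖ + ‖G (-t)‖) / 2 :=
    (hG.norm.add hG.comp_neg.norm).div_const 2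
  simp only [lipschitzMajorant]
  rw [integral_add (integrable_indicator_Icc_const L) hsum,
    integral_indicator_const _ measurableSet_Icc, integral_div,
    integral_add hG.norm hG.comp_neg.norm, hneg]
  norm_num [Measure.real]

end Majorant

section PrincipalValue

variable {E F : Type*} [NormedAddCommGroup E] [NormedSpace ℝ E]
  [NormedAddCommGroup F] [NormedSpace ℝ F] {G : ℝ → E}

/-- The principal value of `∫ t, t⁻¹ • G t`, encoded by folding `t` onto `-t`, which turns it into
an absolutely convergent integral for `PVIntegrable` functions. -/
noncomputable def pvIntegral (G : ℝ → E) : E := ∫ t, (t⁻¹ / 2) • (G t - G (-t))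

/-- Integrable functions whose odd part satisfies Dini's condition at `0`; these are the functions
for which the principal value of `∫ t, t⁻¹ • G t` is given by `pvIntegral`. -/
structure PVIntegrable (G : ℝ → E) : Prop where
  integrable : Integrable G
  dini : Integrable fun t ↦ (t⁻¹ / 2) • (G t - G (-t))

section OddKernel

theorem integrable_odd_smul {k : ℝ → ℝ} (hk : k.Odd) (hi : Integrable fun t ↦ k t • G t) :
    Integrable fun t ↦ (k t / 2) • (G t - G (-t)) := by
  refine ((hi.add hi.comp_neg).smul (2⁻¹ : ℝ)).congr (.of_forall fun t ↦ ?_)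
  simp only [Pi.smul_apply, Pi.add_apply, hk t]
  module

theorem integral_odd_smul {k : ℝ → ℝ} (hk : k.Odd) (hi : Integrable fun t ↦ k t • G t) :
    ∫ t, k t • G t = ∫ t, (k t / 2) • (G t - G (-t)) :=
  calc ∫ t, k t • G t = (2⁻¹ : ℝ) • ((∫ t, k t • G t) + ∫ t, k (-t) • G (-t)) := by
        rw [integral_neg_eq_self fun t ↦ k t • G t]; module
    _ = ∫ t, (2⁻¹ : ℝ) • (k t • G t + k (-t) • G (-t)) := by
        rw [integral_smul, integral_add hi hi.comp_neg]
    _ = ∫ t, (k t / 2) • (G t - G (-t)) := by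
        refine integral_congr_ae (.of_forall fun t ↦ ?_)
        simp only [hk t]
        module

theorem PVIntegrable.tendsto_integral_odd_smul {ι : Type*} {l : Filter ι} [l.IsCountablyGenerated]
    {k : ι → ℝ → ℝ} (hG : PVIntegrable G) (hodd : ∀ i, (k i).Odd)
    (hint : ∀ᶠ i in l, Integrable fun t ↦ k i t • G t)
    (hle : ∀ᶠ i in l, ∀ t, |k i t| ≤ |t|⁻¹)
    (hlim : ∀ t ≠ 0, Tendsto (k · t) l (𝓝 t⁻¹)) :
    Tendsto (fun i ↦ ∫ t, k i t • G t) l (𝓝 (pvIntegral G)) := by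
  have hsymm : Tendsto (fun i ↦ ∫ t, (k i t / 2) • (G t - G (-t))) l (𝓝 (pvIntegral G)) := by
    refine tendsto_integral_filter_of_dominated_convergence _ ?_ ?_ hG.dini.norm ?_
    · filter_upwards [hint] with i hi
      exact (integrable_odd_smul (hodd i) hi).aestronglyMeasurable
    · filter_upwards [hle] with i hi
      refine .of_forall fun t ↦ ?_
      simp only [norm_smul, norm_div, norm_inv, Real.norm_eq_abs]
      gcongr
      exact hi t
    · refine .of_forall fun t ↦ ?_
      rcases eq_or_ne t 0 with rfl | ht
      · simpa only [neg_zero, sub_self, smul_zero] using tendsto_const_nhds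
      · exact ((hlim t ht).div_const 2).smul_const _
  refine hsymm.congr' ?_
  filter_upwards [hint] with i hi using (integral_odd_smul (hodd i) hi).symm

end OddKernel

section Truncation

theorem measurableSet_lt_abs_sub (x ε : ℝ) : MeasurableSet {y : ℝ | ε < |x - y|} :=
  measurableSet_lt measurable_const (by fun_prop)

theorem measurableSet_lt_abs (ε : ℝ) : MeasurableSet {t : ℝ | ε < |t|} :=
  measurableSet_lt measurable_const (by fun_prop)

theorem abs_indicator_inv_le {ε : ℝ} (hε : 0 < ε) (t : ℝ) :
    |{t : ℝ | ε < |t|}.indicator (·⁻¹) t| ≤ ε⁻¹ := by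
  by_cases ht : t ∈ {t : ℝ | ε < |t|}
  · rw [indicator_of_mem ht, abs_inv]
    have hlt : ε < |t| := ht
    gcongr
  · rw [indicator_of_notMem ht, abs_zero]
    positivity

theorem PVIntegrable.tendsto_setIntegral (hG : PVIntegrable G) :
    Tendsto (fun ε : ℝ ↦ ∫ t in {t : ℝ | ε < |t|}, t⁻¹ • G t) (𝓝[>] 0) (𝓝 (pvIntegral G)) := by
  let k (ε : ℝ) : ℝ → ℝ := {t : ℝ | ε < |t|}.indicator (·⁻¹)
  have hodd (ε : ℝ) : (k ε).Odd := fun t ↦ by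
    simp only [k, indicator, mem_ofPred_eq, abs_neg, inv_neg]
    split_ifs <;> simp
  have hint : ∀ᶠ ε in 𝓝[>] 0, Integrable fun t ↦ k ε t • G t := by
    filter_upwards [self_mem_nhdsWithin] with ε hε
    exact hG.integrable.bdd_smul ε⁻¹
      (measurable_inv.indicator (measurableSet_lt_abs ε)).aestronglyMeasurable
      (.of_forall (abs_indicator_inv_le hε))
  have hle : ∀ᶠ ε in 𝓝[>] 0, ∀ t, |k ε t| ≤ |t|⁻¹ :=
    .of_forall fun ε t ↦ by simpa using norm_indicator_le_norm_self (·⁻¹) t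
  have hlim : ∀ t ≠ 0, Tendsto (k · t) (𝓝[>] 0) (𝓝 t⁻¹) := fun t ht ↦ by
    refine tendsto_const_nhds.congr' ?_
    filter_upwards [Ioo_mem_nhdsGT (abs_pos.2 ht)] with ε hε
    exact (indicator_of_mem (s := {t : ℝ | ε < |t|}) hε.2 _).symm
  refine (hG.tendsto_integral_odd_smul hodd hint hle hlim).congr fun ε ↦ ?_
  rw [← integral_indicator (measurableSet_lt_abs ε)]
  simp only [k, indicator_smul_left]

end Truncation

section ContinuousLinearMap

variable (A : E →L[ℝ] F)

theorem PVIntegrable.clm_comp (hG : PVIntegrable G) : PVIntegrable fun t ↦ A (G t) where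
  integrable := A.integrable_comp hG.integrable
  dini := by simpa only [map_smul, map_sub] using A.integrable_comp hG.dini

theorem PVIntegrable.pvIntegral_clm_comp [CompleteSpace E] [CompleteSpace F]
    (hG : PVIntegrable G) : pvIntegral (fun t ↦ A (G t)) = A (pvIntegral G) := by
  simpa only [map_smul, map_sub, pvIntegral] using A.integral_comp_comm hG.dini

end ContinuousLinearMap

section Lipschitz

variable {L : ℝ≥0}

theorem norm_smul_sub_neg_le_lipschitzMajorant (hL : LipschitzWith L G) {c t : ℝ}
    (hc : |c| ≤ |t|⁻¹) : ‖(c / 2) • (G t - G (-t))‖ ≤ lipschitzMajorant G L t := by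
  rw [norm_smul, norm_div, norm_ofNat, Real.norm_eq_abs, lipschitzMajorant]
  by_cases ht : t ∈ Icc (-1 : ℝ) 1
  · have hdiff : ‖G t - G (-t)‖ ≤ L * (2 * |t|) := by
      have habs : ‖t - -t‖ = 2 * |t| := by rw [sub_neg_eq_add, ← two_mul]; simp
      exact habs ▸ hL.norm_sub_le t (-t)
    calc |c| / 2 * ‖G t - G (-t)‖ ≤ |t|⁻¹ / 2 * (L * (2 * |t|)) := by gcongr
      _ = L * (|t|⁻¹ * |t|) := by ring
      _ ≤ L := mul_le_of_le_one_right L.2 inv_mul_le_one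
      _ ≤ _ := by rw [indicator_of_mem ht]; exact le_add_of_nonneg_right (by positivity)
  · have hone : 1 ≤ |t| := by
      contrapose! ht
      exact abs_le.1 ht.le
    calc |c| / 2 * ‖G t - G (-t)‖ ≤ 1 / 2 * (‖G t‖ + ‖G (-t)‖) := by
          gcongr
          · exact hc.trans (inv_le_one_of_one_le₀ hone)
          · exact norm_sub_le _ _
      _ = _ := by rw [indicator_of_notMem ht]; ring

theorem pvIntegrable_of_lipschitzWith (hL : LipschitzWith L G) (hG : Integrable G) :
    PVIntegrable G where
  integrable := hG
  dini := by
    refine (integrable_lipschitzMajorant (L := L) hG).mono' ?_ (.of_forall fun t ↦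
      norm_smul_sub_neg_le_lipschitzMajorant hL (abs_inv t).le)
    exact ((measurable_inv.div_const 2).aestronglyMeasurable (μ := volume)).smul
      (hG.sub hG.comp_neg).aestronglyMeasurable

theorem norm_integral_odd_smul_le {k : ℝ → ℝ} (hk : k.Odd) (hle : ∀ t, |k t| ≤ |t|⁻¹)
    (hi : Integrable fun t ↦ k t • G t) (hL : LipschitzWith L G) (hG : Integrable G) :
    ‖∫ t, k t • G t‖ ≤ 2 * L + ∫ t, ‖G t‖ := by
  rw [integral_odd_smul hk hi, ← integral_lipschitzMajorant hG]
  exact norm_integral_le_of_norm_le (integrable_lipschitzMajorant hG)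
    (.of_forall fun t ↦ norm_smul_sub_neg_le_lipschitzMajorant hL (hle t))

end Lipschitz

section Schwartz

variable (f : SchwartzMap ℝ E)

theorem exists_lipschitzWith_schwartzMap : ∃ L, LipschitzWith L f := by
  let C : ℝ≥0 := ⟨SchwartzMap.seminorm ℝ 0 0 (SchwartzMap.derivCLM ℝ E f), apply_nonneg _ _⟩
  exact ⟨C, lipschitzWith_of_nnnorm_deriv_le f.differentiable
    ((SchwartzMap.derivCLM ℝ E f).norm_le_seminorm ℝ)⟩

theorem pvIntegrable_schwartzMap_sub_left (x : ℝ) : PVIntegrable fun t ↦ f (x - t) := by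
  obtain ⟨L, hL⟩ := exists_lipschitzWith_schwartzMap f
  exact pvIntegrable_of_lipschitzWith (hL.comp ((LipschitzWith.const x).sub LipschitzWith.id))
    (f.integrable.comp_sub_left x)

end Schwartz

end PrincipalValue

section CauchyKernel

/-- The Cauchy kernel `1 / (t + iδ)` as a function of `t ∈ ℝ`, with the regularization `δ` as a
parameter. -/
noncomputable def cauchyKernel (δ t : ℝ) : ℂ := (t + δ * I)⁻¹

theorem cauchyKernel_re (δ t : ℝ) : (cauchyKernel δ t).re = t / (t ^ 2 + δ ^ 2) := by
  simp [cauchyKernel, Complex.normSq_apply, sq]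

theorem cauchyKernel_im (δ t : ℝ) :
    (cauchyKernel δ t).im = -(δ⁻¹ * (1 + (δ⁻¹ * t) ^ 2)⁻¹) := by
  rcases eq_or_ne δ 0 with rfl | hδ
  · simp [cauchyKernel, Complex.normSq_apply]
  · have him : (cauchyKernel δ t).im = -δ / (δ ^ 2 + t ^ 2) := by
      simp [cauchyKernel, Complex.normSq_apply, sq, add_comm]
    rw [him]
    field_simp

theorem odd_cauchyKernel_re (δ : ℝ) : (fun t ↦ (cauchyKernel δ t).re).Odd := fun t ↦ by
  simp only [cauchyKernel_re, neg_sq, neg_div]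

theorem norm_cauchyKernel_le {δ : ℝ} (hδ : 0 < δ) (t : ℝ) : ‖cauchyKernel δ t‖ ≤ δ⁻¹ := by
  rw [cauchyKernel, norm_inv]
  gcongr
  simpa [abs_of_pos hδ] using Complex.abs_im_le_norm (t + δ * I)

theorem abs_cauchyKernel_re_le (δ t : ℝ) : |(cauchyKernel δ t).re| ≤ |t|⁻¹ := by
  rcases eq_or_ne t 0 with rfl | ht
  · simp [cauchyKernel_re]
  · refine (Complex.abs_re_le_norm _).trans ?_
    rw [cauchyKernel, norm_inv]
    gcongr
    simpa using Complex.abs_re_le_norm (t + δ * I)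

theorem measurable_cauchyKernel (δ : ℝ) : Measurable (cauchyKernel δ) := by
  unfold cauchyKernel
  fun_prop

theorem tendsto_cauchyKernel_re {t : ℝ} (ht : t ≠ 0) :
    Tendsto (fun δ ↦ (cauchyKernel δ t).re) (𝓝 0) (𝓝 t⁻¹) := by
  simp only [cauchyKernel_re]
  have hcont : ContinuousAt (fun δ : ℝ ↦ t / (t ^ 2 + δ ^ 2)) 0 :=
    ContinuousAt.div (by fun_prop) (by fun_prop) (by positivity)
  have hzero : t / (t ^ 2 + 0 ^ 2) = t⁻¹ := by field_simp; ring
  simpa only [hzero] using hcont.tendsto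

theorem integral_inv_mul_inv_one_add_sq {δ : ℝ} (hδ : 0 < δ) :
    ∫ t, δ⁻¹ * (1 + (δ⁻¹ * t) ^ 2)⁻¹ = π := by
  rw [integral_const_mul, Measure.integral_comp_mul_left (fun t ↦ (1 + t ^ 2)⁻¹), inv_inv,
    integral_univ_inv_one_add_sq, abs_of_pos hδ, smul_eq_mul, inv_mul_cancel_left₀ hδ.ne']

theorem tendsto_norm_mul_inv_one_add_sq :
    Tendsto (fun t : ℝ ↦ ‖t‖ * (1 + t ^ 2)⁻¹) (Bornology.cobounded ℝ) (𝓝 0) := by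
  refine squeeze_zero (fun t ↦ by positivity) (fun t ↦ ?_)
    tendsto_norm_cobounded_atTop.inv_tendsto_atTop
  calc ‖t‖ * (1 + t ^ 2)⁻¹ = |(cauchyKernel 1 t).re| := by
        rw [cauchyKernel_re, abs_div, abs_of_nonneg (a := t ^ 2 + 1 ^ 2) (by positivity), one_pow,
          add_comm, div_eq_mul_inv, Real.norm_eq_abs]
    _ ≤ ‖t‖⁻¹ := abs_cauchyKernel_re_le 1 t

variable {E : Type*} [NormedAddCommGroup E] {G : ℝ → E} {δ : ℝ}

section Real

variable [NormedSpace ℝ E]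

theorem integrable_cauchyKernel_re_smul (hδ : 0 < δ) (hG : Integrable G) :
    Integrable fun t ↦ (cauchyKernel δ t).re • G t :=
  hG.bdd_smul δ⁻¹ (measurable_cauchyKernel δ).re.aestronglyMeasurable
    (.of_forall fun t ↦ (Complex.abs_re_le_norm _).trans (norm_cauchyKernel_le hδ t))

theorem integrable_cauchyKernel_im_smul (hδ : 0 < δ) (hG : Integrable G) :
    Integrable fun t ↦ (cauchyKernel δ t).im • G t :=
  hG.bdd_smul δ⁻¹ (measurable_cauchyKernel δ).im.aestronglyMeasurable
    (.of_forall fun t ↦ (Complex.abs_im_le_norm _).trans (norm_cauchyKernel_le hδ t))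

theorem norm_integral_cauchyKernel_im_smul_le (hδ : 0 < δ) {M : ℝ} (hM : ∀ t, ‖G t‖ ≤ M) :
    ‖∫ t, (cauchyKernel δ t).im • G t‖ ≤ π * M := by
  have hint : Integrable fun t ↦ δ⁻¹ * (1 + (δ⁻¹ * t) ^ 2)⁻¹ :=
    (integrable_inv_one_add_sq.comp_mul_left' (inv_ne_zero hδ.ne')).const_mul _
  rw [← integral_inv_mul_inv_one_add_sq hδ, ← integral_mul_const]
  refine norm_integral_le_of_norm_le (hint.mul_const M) (.of_forall fun t ↦ ?_)
  rw [norm_smul, cauchyKernel_im, norm_neg, Real.norm_of_nonneg (by positivity)]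
  gcongr
  exact hM t

theorem tendsto_integral_cauchyKernel_im_smul [CompleteSpace E] (hG : Integrable G)
    (hc : ContinuousAt G 0) :
    Tendsto (fun δ ↦ ∫ t, (cauchyKernel δ t).im • G t) (𝓝[>] 0) (𝓝 (-(π • G 0))) := by
  let φ (t : ℝ) : ℝ := π⁻¹ * (1 + t ^ 2)⁻¹
  have hφ : ∫ t, φ t = 1 := by
    rw [integral_const_mul, integral_univ_inv_one_add_sq, inv_mul_cancel₀ pi_ne_zero]
  have hdecay : Tendsto (fun t : ℝ ↦ ‖t‖ ^ Module.finrank ℝ ℝ * φ t) (Bornology.cobounded ℝ)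
      (𝓝 0) := by
    simpa [φ, mul_left_comm] using tendsto_norm_mul_inv_one_add_sq.const_mul π⁻¹
  have hpoisson := (tendsto_integral_comp_smul_smul_of_integrable (fun t ↦ by positivity) hφ
    hdecay hG hc).comp tendsto_inv_nhdsGT_zero
  rw [← neg_smul]
  refine (hpoisson.const_smul (-π)).congr fun δ ↦ ?_
  rw [Function.comp_apply, ← integral_smul]
  refine integral_congr_ae (.of_forall fun t ↦ ?_)
  simp only [smul_smul, cauchyKernel_im, φ, Module.finrank_self, pow_one, smul_eq_mul]
  congr 1
  field_simp

end Real

section Complex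

variable [NormedSpace ℂ E]

theorem integral_cauchyKernel_smul (hδ : 0 < δ) (hG : Integrable G) :
    ∫ t, cauchyKernel δ t • G t =
      (∫ t, (cauchyKernel δ t).re • G t) + I • ∫ t, (cauchyKernel δ t).im • G t := by
  rw [← integral_smul]
  refine Eq.trans ?_ (integral_add (integrable_cauchyKernel_re_smul hδ hG)
    ((integrable_cauchyKernel_im_smul hδ hG).smul I))
  refine integral_congr_ae (.of_forall fun t ↦ ?_)
  change cauchyKernel δ t • G t = _ • G t + I • _ • G t
  conv_lhs => rw [← Complex.re_add_im (cauchyKernel δ t), add_smul, mul_comm, mul_smul]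
  simp only [Complex.coe_smul]

theorem norm_integral_cauchyKernel_smul_le (hδ : 0 < δ) (hG : Integrable G) {L : ℝ≥0}
    (hL : LipschitzWith L G) {M : ℝ} (hM : ∀ t, ‖G t‖ ≤ M) :
    ‖∫ t, cauchyKernel δ t • G t‖ ≤ 2 * L + (∫ t, ‖G t‖) + π * M := by
  rw [integral_cauchyKernel_smul hδ hG]
  refine norm_add_le_of_le ?_ ?_
  · exact norm_integral_odd_smul_le (odd_cauchyKernel_re δ) (abs_cauchyKernel_re_le δ)
      (integrable_cauchyKernel_re_smul hδ hG) hL hG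
  · rw [norm_smul, Complex.norm_I, one_mul]
    exact norm_integral_cauchyKernel_im_smul_le hδ hM

/-- The **Sokhotski–Plemelj formula**. -/
theorem PVIntegrable.tendsto_integral_cauchyKernel_smul [CompleteSpace E] (hG : PVIntegrable G)
    (hc : ContinuousAt G 0) :
    Tendsto (fun δ ↦ ∫ t, cauchyKernel δ t • G t) (𝓝[>] 0)
      (𝓝 (pvIntegral G - (π * I) • G 0)) := by
  have hre : Tendsto (fun δ ↦ ∫ t, (cauchyKernel δ t).re • G t) (𝓝[>] 0) (𝓝 (pvIntegral G)) := by
    refine hG.tendsto_integral_odd_smul odd_cauchyKernel_re ?_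
      (.of_forall abs_cauchyKernel_re_le)
      fun t ht ↦ (tendsto_cauchyKernel_re ht).mono_left nhdsWithin_le_nhds
    filter_upwards [self_mem_nhdsWithin] with δ hδ
      using integrable_cauchyKernel_re_smul hδ hG.integrable
  have him := (tendsto_integral_cauchyKernel_im_smul hG.integrable hc).const_smul I
  have hlim : pvIntegral G + I • -(π • G 0) = pvIntegral G - (π * I) • G 0 := by
    rw [smul_neg, ← sub_eq_add_neg, mul_comm, mul_smul, Complex.coe_smul]
  rw [← hlim]
  refine (hre.add him).congr' ?_
  filter_upwards [self_mem_nhdsWithin] with δ hδ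
    using (integral_cauchyKernel_smul hδ hG.integrable).symm

end Complex

end CauchyKernel

section CauchyTransform

variable {E : Type*} [NormedAddCommGroup E] [NormedSpace ℂ E] {z : ℂ}

/-- The Cauchy transform `z ↦ ∫ f(y) / (z - y) dy` of a function on the real line. -/
noncomputable def cauchyTransform (f : ℝ → E) (z : ℂ) : E := ∫ y : ℝ, (z - y)⁻¹ • f y

theorem sub_ofReal_ne_zero (hz : 0 < z.im) (y : ℝ) : z - y ≠ 0 := fun h ↦
  hz.ne' (by simpa using congrArg Complex.im h)

theorem norm_inv_sub_ofReal_le {c : ℝ} (hc : 0 < c) (hz : c ≤ z.im) (y : ℝ) :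
    ‖(z - y)⁻¹‖ ≤ c⁻¹ := by
  rw [norm_inv]
  gcongr
  exact hz.trans (by simpa using Complex.im_le_norm (z - y))

theorem continuous_inv_sub_ofReal (hz : 0 < z.im) : Continuous fun y : ℝ ↦ (z - y)⁻¹ :=
  Continuous.inv₀ (by fun_prop) (sub_ofReal_ne_zero hz)

theorem hasDerivAt_inv_sub_ofReal (hz : 0 < z.im) (y : ℝ) :
    HasDerivAt (fun y : ℝ ↦ (z - y)⁻¹) ((z - y)⁻¹ ^ 2) y := by
  have hinv := ((hasDerivAt_id (y : ℂ)).const_sub z).inv (sub_ofReal_ne_zero hz y)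
  exact hinv.comp_ofReal.congr_deriv (by simp)

theorem hasDerivAt_inv_sub (hz : 0 < z.im) (y : ℝ) :
    HasDerivAt (fun z : ℂ ↦ (z - y)⁻¹) (-(z - y)⁻¹ ^ 2) z :=
  ((hasDerivAt_id z).sub_const (y : ℂ)).inv (sub_ofReal_ne_zero hz y) |>.congr_deriv (by
    simp [neg_div])

section Integrable

variable {f : ℝ → E}

theorem integrable_inv_sub_smul (hz : 0 < z.im) (hf : Integrable f) :
    Integrable fun y : ℝ ↦ (z - y)⁻¹ • f y :=
  hf.bdd_smul z.im⁻¹ (continuous_inv_sub_ofReal hz).aestronglyMeasurable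
    (.of_forall (norm_inv_sub_ofReal_le hz le_rfl))

theorem norm_inv_sub_sq_smul_le {c : ℝ} (hc : 0 < c) (hz : c ≤ z.im) (y : ℝ) :
    ‖(z - y)⁻¹ ^ 2 • f y‖ ≤ c⁻¹ ^ 2 * ‖f y‖ := by
  rw [norm_smul, norm_pow]
  gcongr
  exact norm_inv_sub_ofReal_le hc hz y

theorem integrable_inv_sub_sq_smul (hz : 0 < z.im) (hf : Integrable f) :
    Integrable fun y : ℝ ↦ (z - y)⁻¹ ^ 2 • f y :=
  (hf.norm.const_mul (z.im⁻¹ ^ 2)).mono'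
    (((continuous_inv_sub_ofReal hz).pow 2).aestronglyMeasurable.smul hf.aestronglyMeasurable)
    (.of_forall (norm_inv_sub_sq_smul_le hz le_rfl))

theorem hasDerivAt_cauchyTransform (hz : 0 < z.im) (hf : Integrable f) :
    HasDerivAt (cauchyTransform f) (-∫ y : ℝ, (z - y)⁻¹ ^ 2 • f y) z := by
  have hs : {w : ℂ | z.im / 2 < w.im} ∈ 𝓝 z :=
    (isOpen_lt continuous_const Complex.continuous_im).mem_nhds (half_lt_self hz)
  have hpos {w : ℂ} (hw : z.im / 2 < w.im) : 0 < w.im := (half_pos hz).trans hw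
  rw [← integral_neg]
  refine (hasDerivAt_integral_of_dominated_loc_of_deriv_le
    (F' := fun w (y : ℝ) ↦ -((w - y)⁻¹ ^ 2 • f y)) hs ?_ (integrable_inv_sub_smul hz hf)
    (integrable_inv_sub_sq_smul hz hf).neg.aestronglyMeasurable ?_
    (hf.norm.const_mul ((z.im / 2)⁻¹ ^ 2)) ?_).2
  · filter_upwards [hs] with w hw
    exact (integrable_inv_sub_smul (hpos hw) hf).aestronglyMeasurable
  · refine .of_forall fun y w hw ↦ ?_
    rw [norm_neg]
    exact norm_inv_sub_sq_smul_le (half_pos hz) (le_of_lt hw) y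
  · refine .of_forall fun (y : ℝ) w hw ↦ ?_
    rw [← neg_smul]
    exact (hasDerivAt_inv_sub (hpos hw) y).smul_const _

theorem cauchyTransform_add_mul_I (f : ℝ → E) (x δ : ℝ) :
    cauchyTransform f (x + δ * I) = ∫ t, cauchyKernel δ t • f (x - t) := by
  rw [cauchyTransform, ← integral_sub_left_eq_self _ volume x]
  refine integral_congr_ae (.of_forall fun t ↦ ?_)
  simp only [cauchyKernel]
  congr 2
  push_cast
  ring

theorem norm_cauchyTransform_le (hz : 0 < z.im) (hf : Integrable f) {L : ℝ≥0}
    (hL : LipschitzWith L f) {M : ℝ} (hM : ∀ y, ‖f y‖ ≤ M) :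
    ‖cauchyTransform f z‖ ≤ 2 * L + (∫ y, ‖f y‖) + π * M := by
  have hLsub : LipschitzWith L fun t ↦ f (z.re - t) := by
    simpa [Function.comp_def] using hL.comp ((LipschitzWith.const z.re).sub LipschitzWith.id)
  have hle := norm_integral_cauchyKernel_smul_le hz (hf.comp_sub_left z.re) hLsub fun t ↦ hM _
  rwa [← cauchyTransform_add_mul_I, Complex.re_add_im,
    integral_sub_left_eq_self (fun t ↦ ‖f t‖) volume z.re] at hle

end Integrable

section Schwartz

open scoped SchwartzMap

variable (f : 𝓢(ℝ, E))

theorem exists_norm_cauchyTransform_le :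
    ∃ C : ℝ≥0, ∀ z : ℂ, 0 < z.im → ‖cauchyTransform f z‖ ≤ C := by
  obtain ⟨L, hL⟩ := exists_lipschitzWith_schwartzMap f
  exact ⟨_, fun z hz ↦ (norm_cauchyTransform_le hz f.integrable hL
    (f.norm_le_seminorm ℝ)).trans (Real.le_coe_toNNReal _)⟩

theorem hasDerivAt_cauchyTransform_derivCLM (hz : 0 < z.im) :
    HasDerivAt (cauchyTransform f) (cauchyTransform (SchwartzMap.derivCLM ℝ E f) z) z := by
  have hparts : cauchyTransform (SchwartzMap.derivCLM ℝ E f) z = -∫ y : ℝ, (z - y)⁻¹ ^ 2 • f y :=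
    integral_bilinear_hasDerivAt_right_eq_neg_left_of_integrable
      (L := ContinuousLinearMap.lsmul ℝ ℂ)
      (fun y _ ↦ hasDerivAt_inv_sub_ofReal hz y) (fun y _ ↦ f.hasDerivAt y)
      (integrable_inv_sub_smul hz (SchwartzMap.integrable _))
      (integrable_inv_sub_sq_smul hz f.integrable) (integrable_inv_sub_smul hz f.integrable)
  exact hparts ▸ hasDerivAt_cauchyTransform hz f.integrable

theorem smul_cauchyTransform (hz : 0 < z.im) :
    z • cauchyTransform f z =
      (∫ y, f y) + cauchyTransform (SchwartzMap.smulLeftCLM E (fun x : ℝ ↦ x) f) z := by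
  simp only [cauchyTransform]
  rw [← integral_smul, ← integral_add f.integrable
    (integrable_inv_sub_smul hz (SchwartzMap.integrable _))]
  refine integral_congr_ae (.of_forall fun y ↦ ?_)
  have hsub := sub_ofReal_ne_zero hz y
  simp only [SchwartzMap.smulLeftCLM_apply_apply Function.HasTemperateGrowth.id']
  rw [← Complex.coe_smul, smul_smul, smul_smul, ← sub_add_cancel z (y : ℂ)]
  simp only [add_sub_cancel_right]
  rw [add_mul, mul_inv_cancel₀ hsub, add_smul, one_smul, mul_comm]

theorem exists_norm_mul_norm_cauchyTransform_le :
    ∃ C : ℝ, ∀ z : ℂ, 0 < z.im → ‖z‖ * ‖cauchyTransform f z‖ ≤ C := by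
  obtain ⟨C, hC⟩ := exists_norm_cauchyTransform_le (SchwartzMap.smulLeftCLM E (fun x : ℝ ↦ x) f)
  refine ⟨‖∫ y, f y‖ + C, fun z hz ↦ ?_⟩
  rw [← norm_smul, smul_cauchyTransform f hz]
  exact norm_add_le_of_le le_rfl (hC z hz)

end Schwartz

end CauchyTransform

section BoundaryValues

theorem setIntegral_lt_abs_sub {E : Type*} [NormedAddCommGroup E] [NormedSpace ℝ E] (F : ℝ → E)
    (x ε : ℝ) :
    ∫ y in {y : ℝ | ε < |x - y|}, F y = ∫ t in {t : ℝ | ε < |t|}, F (x - t) := by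
  rw [← integral_indicator (measurableSet_lt_abs_sub x ε), ← integral_sub_left_eq_self _ volume x,
    ← integral_indicator (measurableSet_lt_abs ε)]
  simp only [indicator, mem_ofPred_eq, sub_sub_cancel]

theorem HilbertAt.pvIntegral_sub_left {f : ℝ → ℝ} {x H : ℝ} (hH : HilbertAt f x H)
    (hf : PVIntegrable fun t ↦ f (x - t)) : pvIntegral (fun t ↦ f (x - t)) = π * H := by
  refine tendsto_nhds_unique hf.tendsto_setIntegral ((hH.const_mul π).congr fun ε ↦ ?_)
  rw [← mul_assoc, mul_one_div_cancel pi_ne_zero, one_mul, setIntegral_lt_abs_sub]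
  simp only [sub_sub_cancel, smul_eq_mul, inv_mul_eq_div]

theorem tendsto_cauchyTransform_add_mul_I {E : Type*} [NormedAddCommGroup E] [NormedSpace ℂ E]
    [CompleteSpace E] {f : ℝ → E} {x : ℝ} (hf : PVIntegrable fun t ↦ f (x - t))
    (hc : ContinuousAt f x) :
    Tendsto (fun δ : ℝ ↦ cauchyTransform f (x + δ * I)) (𝓝[>] 0)
      (𝓝 (pvIntegral (fun t ↦ f (x - t)) - (π * I) • f x)) := by
  have hc' : ContinuousAt (fun t ↦ f (x - t)) 0 :=
    ContinuousAt.comp (f := fun t ↦ x - t) (by simpa using hc) (by fun_prop)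
  simpa only [cauchyTransform_add_mul_I, sub_zero] using
    hf.tendsto_integral_cauchyKernel_smul hc'

theorem HilbertAt.tendsto_cauchyTransform {g : SchwartzMap ℝ ℝ} {x H : ℝ} (hH : HilbertAt g x H) :
    Tendsto (fun δ : ℝ ↦ cauchyTransform (fun y ↦ (g y : ℂ)) (x + δ * I)) (𝓝[>] 0)
      (𝓝 (π * (H - I * g x))) := by
  have hg := pvIntegrable_schwartzMap_sub_left g x
  have hpv : pvIntegral (fun t ↦ (g (x - t) : ℂ)) = (π * H : ℝ) :=
    (hg.pvIntegral_clm_comp Complex.ofRealCLM).trans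
      (congrArg _ (hH.pvIntegral_sub_left hg))
  have htendsto := tendsto_cauchyTransform_add_mul_I (f := fun y ↦ (g y : ℂ))
    (hg.clm_comp Complex.ofRealCLM)
    (Complex.continuous_ofReal.comp g.continuous).continuousAt
  rw [hpv] at htendsto
  convert htendsto using 2
  push_cast
  rw [smul_eq_mul]
  ring

end BoundaryValues

section Contour

open UpperHalfPlane (upperHalfPlaneSet)

theorem norm_le_mul_inv_one_add_sq {E : Type*} [NormedAddCommGroup E] {F : ℂ → E} {C : ℝ}
    (hC : ∀ z : ℂ, 0 ≤ z.im → (1 + ‖z‖ ^ 2) * ‖F z‖ ≤ C) {z : ℂ} {r : ℝ} (hz : 0 ≤ z.im)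
    (hr : |r| ≤ ‖z‖) : ‖F z‖ ≤ C * (1 + r ^ 2)⁻¹ := by
  rw [← div_eq_mul_inv, le_div_iff₀' (by positivity), ← sq_abs r]
  exact (hC z hz).trans' (by gcongr)

variable {E : Type*} [NormedAddCommGroup E] [NormedSpace ℂ E] {F : ℂ → E} {C : ℝ}

theorem integrable_ofReal_of_diffContOnCl (hF : DiffContOnCl ℂ F upperHalfPlaneSet)
    (hC : ∀ z : ℂ, 0 ≤ z.im → (1 + ‖z‖ ^ 2) * ‖F z‖ ≤ C) : Integrable fun x : ℝ ↦ F x := by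
  have hcont : Continuous fun x : ℝ ↦ F x :=
    hF.continuousOn.comp_continuous Complex.continuous_ofReal fun x ↦ by simp
  exact (integrable_inv_one_add_sq.const_mul C).mono' hcont.aestronglyMeasurable
    (.of_forall fun x ↦ norm_le_mul_inv_one_add_sq hC (by simp) (by simp))

theorem intervalIntegral_ofReal_eq_of_diffContOnCl (hF : DiffContOnCl ℂ F upperHalfPlaneSet)
    {R : ℝ} (hR : 0 ≤ R) :
    ∫ x : ℝ in -R..R, F x = (∫ x : ℝ in -R..R, F (x + R * I)) -
      I • (∫ y : ℝ in 0..R, F (R + y * I)) + I • ∫ y : ℝ in 0..R, F (-R + y * I) := by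
  have hrect := Complex.integral_boundary_rect_eq_zero_of_continuousOn_of_differentiableOn F
    (-R : ℝ) (R + R * I) (hF.continuousOn.mono ?_) (hF.differentiableOn.mono ?_)
  · simp only [Complex.ofReal_neg, Complex.neg_re, Complex.neg_im, Complex.ofReal_re,
      Complex.ofReal_im, Complex.add_re, Complex.add_im, Complex.re_ofReal_mul,
      Complex.im_ofReal_mul, Complex.I_re, Complex.I_im, Complex.ofReal_zero, neg_zero, zero_mul,
      mul_zero, mul_one, add_zero, zero_add] at hrect
    rw [← sub_eq_zero, ← hrect]
    abel
  · intro z hz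
    have him : z.im ∈ Icc 0 R := by simpa [uIcc_of_le hR] using hz.2
    simpa using him.1
  · intro z hz
    have him : z.im ∈ Ioo 0 R := by simpa [hR] using hz.2
    exact him.1

theorem norm_intervalIntegral_ofReal_le (hF : DiffContOnCl ℂ F upperHalfPlaneSet)
    (hC : ∀ z : ℂ, 0 ≤ z.im → (1 + ‖z‖ ^ 2) * ‖F z‖ ≤ C) {R : ℝ} (hR : 0 ≤ R) :
    ‖∫ x : ℝ in -R..R, F x‖ ≤ 4 * C * (‖R‖ * (1 + R ^ 2)⁻¹) := by
  have htop : ‖∫ x : ℝ in -R..R, F (x + R * I)‖ ≤ C * (1 + R ^ 2)⁻¹ * |R - -R| :=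
    intervalIntegral.norm_integral_le_of_norm_le_const fun x _ ↦
      norm_le_mul_inv_one_add_sq hC (by simpa) (by simpa using Complex.abs_im_le_norm (x + R * I))
  have hside {s : ℝ} (hs : |R| = |s|) :
      ‖I • ∫ y : ℝ in 0..R, F (s + y * I)‖ ≤ C * (1 + R ^ 2)⁻¹ * |R - 0| := by
    rw [norm_smul, Complex.norm_I, one_mul]
    refine intervalIntegral.norm_integral_le_of_norm_le_const fun y hy ↦
      norm_le_mul_inv_one_add_sq hC ?_ ?_
    · rw [uIoc_of_le hR] at hy
      simpa using hy.1.le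
    · simpa [hs] using Complex.abs_re_le_norm (s + y * I)
  rw [intervalIntegral_ofReal_eq_of_diffContOnCl hF hR, ← Complex.ofReal_neg]
  refine (norm_add_le_of_le (norm_sub_le_of_le htop (hside rfl))
    (hside (abs_neg R).symm)).trans_eq ?_
  rw [sub_neg_eq_add, sub_zero, ← two_mul, abs_mul, abs_two, Real.norm_eq_abs]
  ring

theorem integral_ofReal_eq_zero_of_diffContOnCl (hF : DiffContOnCl ℂ F upperHalfPlaneSet)
    (hC : ∀ z : ℂ, 0 ≤ z.im → (1 + ‖z‖ ^ 2) * ‖F z‖ ≤ C) : ∫ x : ℝ, F x = 0 := by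
  have hlim := intervalIntegral_tendsto_integral (integrable_ofReal_of_diffContOnCl hF hC)
    tendsto_neg_atTop_atBot tendsto_id
  have hzero := (tendsto_norm_mul_inv_one_add_sq.mono_left
    IsOrderBornology.atTop_le_cobounded).const_mul (4 * C)
  rw [mul_zero] at hzero
  refine tendsto_nhds_unique hlim (squeeze_zero_norm' ?_ hzero)
  filter_upwards [eventually_ge_atTop 0] with R hR using norm_intervalIntegral_ofReal_le hF hC hR

theorem integral_cauchyKernel_smul_eq_zero_of_diffContOnCl
    (hF : DiffContOnCl ℂ F upperHalfPlaneSet)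
    (hC : ∀ z : ℂ, 0 ≤ z.im → (1 + ‖z‖ ^ 2) * ‖F z‖ ≤ C) {δ : ℝ} (hδ : 0 < δ) :
    ∫ x : ℝ, cauchyKernel δ x • F x = 0 := by
  have hle {z : ℂ} (hz : 0 ≤ z.im) : δ ≤ ‖z + δ * I‖ :=
    (le_add_of_nonneg_left hz).trans (by simpa using Complex.im_le_norm (z + δ * I))
  have hinv : DiffContOnCl ℂ (fun z ↦ (z + δ * I)⁻¹) upperHalfPlaneSet :=
    ((differentiable_id.add_const (δ * I)).diffContOnCl).inv fun z hz ↦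
      norm_pos_iff.1 (hδ.trans_le (hle (by simpa using hz)))
  refine integral_ofReal_eq_zero_of_diffContOnCl (F := fun z ↦ (z + δ * I)⁻¹ • F z)
    (C := δ⁻¹ * C) (hinv.smul hF) fun z hz ↦ ?_
  rw [norm_smul, norm_inv, mul_left_comm]
  gcongr
  exacts [hle hz, hC z hz]

theorem pvIntegral_ofReal_of_diffContOnCl [CompleteSpace E]
    (hF : DiffContOnCl ℂ F upperHalfPlaneSet)
    (hC : ∀ z : ℂ, 0 ≤ z.im → (1 + ‖z‖ ^ 2) * ‖F z‖ ≤ C)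
    (hpv : PVIntegrable fun x : ℝ ↦ F x) :
    pvIntegral (fun x : ℝ ↦ F x) = (π * I) • F 0 := by
  have hcont : Continuous fun x : ℝ ↦ F x :=
    hF.continuousOn.comp_continuous Complex.continuous_ofReal fun x ↦ by simp
  have hlim := hpv.tendsto_integral_cauchyKernel_smul hcont.continuousAt
  have hzero : (fun δ ↦ ∫ x : ℝ, cauchyKernel δ x • F x) =ᶠ[𝓝[>] 0] fun _ ↦ 0 := by
    filter_upwards [self_mem_nhdsWithin] with δ hδ
      using integral_cauchyKernel_smul_eq_zero_of_diffContOnCl hF hC hδ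
  simpa [sub_eq_zero] using tendsto_nhds_unique (hlim.congr' hzero) tendsto_const_nhds

theorem pvIntegrable_and_pvIntegral_eq_of_lipschitzOnWith [FiniteDimensional ℝ E] {L : ℝ≥0}
    (hL : LipschitzOnWith L F upperHalfPlaneSet) (hF : DifferentiableOn ℂ F upperHalfPlaneSet)
    (hC : ∀ z : ℂ, 0 < z.im → (1 + ‖z‖ ^ 2) * ‖F z‖ ≤ C) {b : ℝ → E}
    (hb : ∀ x : ℝ, Tendsto (fun δ : ℝ ↦ F (x + δ * I)) (𝓝[>] 0) (𝓝 (b x))) :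
    PVIntegrable b ∧ pvIntegral b = (π * I) • b 0 := by
  have : CompleteSpace E := FiniteDimensional.complete ℝ E
  obtain ⟨Φ, hΦ, hΦF⟩ := hL.extend_finite_dimension
  have hΦb (x : ℝ) : Φ x = b x := by
    have hpath : Tendsto (fun δ : ℝ ↦ (x + δ * I : ℂ)) (𝓝[>] 0) (𝓝 x) :=
      tendsto_nhdsWithin_of_tendsto_nhds (Continuous.tendsto' (by fun_prop) _ _ (by simp))
    refine tendsto_nhds_unique ((hΦ.continuous.tendsto x).comp hpath) ((hb x).congr' ?_)
    filter_upwards [self_mem_nhdsWithin] with δ (hδ : 0 < δ)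
    exact hΦF (show 0 < (x + δ * I : ℂ).im by simpa)
  have hΦdiff : DiffContOnCl ℂ Φ upperHalfPlaneSet :=
    ⟨hF.congr fun z hz ↦ (hΦF hz).symm, hΦ.continuous.continuousOn⟩
  have hΦC (z : ℂ) (hz : 0 ≤ z.im) : (1 + ‖z‖ ^ 2) * ‖Φ z‖ ≤ C :=
    le_on_closure (fun w hw ↦ hΦF hw ▸ hC w hw)
      (f := fun z ↦ (1 + ‖z‖ ^ 2) * ‖Φ z‖) (s := upperHalfPlaneSet)
      (by have := hΦ.continuous; fun_prop) continuousOn_const (by simpa)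
  have hpv : PVIntegrable fun x : ℝ ↦ Φ x :=
    pvIntegrable_of_lipschitzWith (hΦ.comp Complex.isometry_ofReal.lipschitz)
      (integrable_ofReal_of_diffContOnCl hΦdiff hΦC)
  have heq := pvIntegral_ofReal_of_diffContOnCl hΦdiff hΦC hpv
  rw [← Complex.ofReal_zero] at heq
  simp only [hΦb] at hpv heq
  exact ⟨hpv, heq⟩

end Contour

section Square

open UpperHalfPlane (upperHalfPlaneSet)
open scoped SchwartzMap

theorem hasDerivAt_cauchyTransform_sq (f : 𝓢(ℝ, ℂ)) {z : ℂ} (hz : 0 < z.im) :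
    HasDerivAt (cauchyTransform f ^ 2)
      (2 * cauchyTransform f z * cauchyTransform (SchwartzMap.derivCLM ℝ ℂ f) z) z := by
  simpa using (hasDerivAt_cauchyTransform_derivCLM f hz).pow 2

theorem exists_lipschitzOnWith_cauchyTransform_sq (f : 𝓢(ℝ, ℂ)) :
    ∃ L, LipschitzOnWith L (cauchyTransform f ^ 2) upperHalfPlaneSet := by
  obtain ⟨C, hC⟩ := exists_norm_cauchyTransform_le f
  obtain ⟨C', hC'⟩ := exists_norm_cauchyTransform_le (SchwartzMap.derivCLM ℝ ℂ f)
  refine ⟨2 * C * C', (convex_halfSpace_im_gt 0).lipschitzOnWith_of_nnnorm_hasDerivWithin_le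
    (fun z hz ↦ (hasDerivAt_cauchyTransform_sq f hz).hasDerivWithinAt) fun z hz ↦ ?_⟩
  rw [nnnorm_mul, nnnorm_mul, Complex.nnnorm_ofNat]
  gcongr
  exacts [hC z hz, hC' z hz]

theorem exists_one_add_sq_mul_norm_cauchyTransform_sq_le (f : 𝓢(ℝ, ℂ)) :
    ∃ C, ∀ z : ℂ, 0 < z.im → (1 + ‖z‖ ^ 2) * ‖(cauchyTransform f ^ 2) z‖ ≤ C := by
  obtain ⟨C, hC⟩ := exists_norm_cauchyTransform_le f
  obtain ⟨D, hD⟩ := exists_norm_mul_norm_cauchyTransform_le f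
  refine ⟨C ^ 2 + D ^ 2, fun z hz ↦ ?_⟩
  rw [Pi.pow_apply, norm_pow, add_mul, one_mul, ← mul_pow]
  gcongr
  exacts [hC z hz, hD z hz]

theorem pvIntegrable_sq_and_pvIntegral_sq_eq (f : 𝓢(ℝ, ℂ)) {b : ℝ → ℂ}
    (hb : ∀ x : ℝ, Tendsto (fun δ : ℝ ↦ cauchyTransform f (x + δ * I)) (𝓝[>] 0) (𝓝 (b x))) :
    PVIntegrable (fun x ↦ b x ^ 2) ∧ pvIntegral (fun x ↦ b x ^ 2) = π * I * b 0 ^ 2 := by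
  obtain ⟨L, hL⟩ := exists_lipschitzOnWith_cauchyTransform_sq f
  obtain ⟨C, hC⟩ := exists_one_add_sq_mul_norm_cauchyTransform_sq_le f
  exact pvIntegrable_and_pvIntegral_eq_of_lipschitzOnWith hL
    (fun z hz ↦ (hasDerivAt_cauchyTransform_sq f hz).differentiableAt.differentiableWithinAt) hC
    fun x ↦ (hb x).pow 2

theorem re_sq_mul_sub_I_mul (r c d : ℝ) :
    ((r * (c - I * d) : ℂ) ^ 2).re = r ^ 2 * (c ^ 2 - d ^ 2) := by
  simp only [sq, Complex.mul_re, Complex.mul_im, Complex.sub_re, Complex.sub_im, Complex.ofReal_re,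
    Complex.ofReal_im, Complex.I_re, Complex.I_im]
  ring

theorem im_sq_mul_sub_I_mul (r c d : ℝ) :
    ((r * (c - I * d) : ℂ) ^ 2).im = -(2 * r ^ 2) * (c * d) := by
  simp only [sq, Complex.mul_re, Complex.mul_im, Complex.sub_re, Complex.sub_im, Complex.ofReal_re,
    Complex.ofReal_im, Complex.I_re, Complex.I_im]
  ring

theorem pvIntegrable_hilbert_mul_and_pvIntegral_eq (g : 𝓢(ℝ, ℝ)) {H : ℝ → ℝ}
    (hH : ∀ x, HilbertAt g x (H x)) :
    PVIntegrable (fun x ↦ H x * g x) ∧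
      pvIntegral (fun x ↦ H x * g x) = π / 2 * (g 0 ^ 2 - H 0 ^ 2) := by
  obtain ⟨hpv, hpv_eq⟩ := pvIntegrable_sq_and_pvIntegral_sq_eq
    (SchwartzMap.postcompCLM Complex.ofRealCLM g) fun x ↦ (hH x).tendsto_cauchyTransform
  let A : ℂ →L[ℝ] ℝ := (-(2 * π ^ 2)⁻¹) • Complex.imCLM
  have hA (w : ℂ) : A w = -(2 * π ^ 2)⁻¹ * w.im := rfl
  have hA_sq (x : ℝ) : A ((π * (H x - I * g x)) ^ 2) = H x * g x := by
    rw [hA, im_sq_mul_sub_I_mul]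
    field_simp
  have hpvA := hpv.clm_comp A
  have hpvA_eq := hpv.pvIntegral_clm_comp A
  simp only [hA_sq] at hpvA hpvA_eq
  refine ⟨hpvA, hpvA_eq.trans ?_⟩
  rw [hpv_eq, hA, mul_assoc, Complex.im_ofReal_mul, Complex.I_mul_im, re_sq_mul_sub_I_mul]
  field_simp
  ring

end Square

/-- For a Schwartz function `g`, the principal value integral
`PV ∫ Hg(x)·g(x)/x dx` exists and equals `(π/2)(g(0)² − Hg(0)²)`;
in particular, if `g(0) = 0` it equals `−(π/2)·Hg(0)²`. -/
theorem pv_integral_Hg_g_div_x (g : SchwartzMap ℝ ℝ) (Hg : ℝ → ℝ)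
    (hH : ∀ x : ℝ, HilbertAt (fun y => g y) x (Hg x)) :
    Filter.Tendsto
      (fun ε : ℝ => ∫ x in {x : ℝ | ε < |x|}, Hg x * g x / x)
      (nhdsWithin 0 (Set.Ioi 0))
      (nhds ((Real.pi / 2) * ((g 0)^2 - (Hg 0)^2))) ∧
    (g 0 = 0 →
      Filter.Tendsto
        (fun ε : ℝ => ∫ x in {x : ℝ | ε < |x|}, Hg x * g x / x)
        (nhdsWithin 0 (Set.Ioi 0))
        (nhds (-(Real.pi / 2) * (Hg 0)^2))) := by
  obtain ⟨hpv, hpv_eq⟩ := pvIntegrable_hilbert_mul_and_pvIntegral_eq g hH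
  have hlim := hpv.tendsto_setIntegral
  simp only [hpv_eq, smul_eq_mul, inv_mul_eq_div] at hlim
  refine ⟨hlim, fun hg ↦ ?_⟩
  convert hlim using 2
  rw [hg]
  ring
end
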